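/- Let 0 < α ≤ 1/2 and let t satisfy απ < t ≤ π. Then the set {Re(e^{it}·f(z)/z) : f ∈ K(α), z ∈ 𝔻 \ {0}} is not bounded below; that is, Q_α(t) = −∞. In fact this already holds with the single function f = k_α: Re(e^{it}·k_α(z)/z) is not bounded below for z ∈ 𝔻 \ {0}. -/

import Mathlib

/-- The unit disk `{z : ℂ | |z| < 1}`. -/
noncomputable def unitDisk : Set ℂ := Metric.ball 0 1

/-- The extremal convex function of order `α`:
`k_α(z) = ((1-z)^(2α-1) - 1)/(1-2α)` (so that `k_α(0)=0`, `k_α'(0)=1`),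
with `k_{1/2}(z) = -log(1-z)` (principal branches). -/
noncomputable def kfun (α : ℝ) (z : ℂ) : ℂ :=
  if α = 1 / 2 then -Complex.log (1 - z)
  else ((1 - z) ^ ((2 * α - 1 : ℝ) : ℂ) - 1) / ((1 - 2 * α : ℝ) : ℂ)

/-- `h_α(z) = k_α(z)/z` for `z ≠ 0`, `h_α(0) = 1`. -/
noncomputable def hfun (α : ℝ) (z : ℂ) : ℂ :=
  if z = 0 then 1 else kfun α z / z

/-- `f ∈ K(α)`: `f` is analytic on the unit disk, normalized by `f(0)=0`, `f'(0)=1`,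
with nonvanishing derivative and `Re(1 + z f''(z)/f'(z)) > α` on the disk. -/
def IsConvexOfOrder (α : ℝ) (f : ℂ → ℂ) : Prop :=
  DifferentiableOn ℂ f unitDisk ∧ f 0 = 0 ∧ deriv f 0 = 1 ∧
    ∀ z ∈ unitDisk, deriv f z ≠ 0 ∧
      α < (1 + z * deriv (deriv f) z / deriv f z).re

theorem one_sub_mem_slitPlane {z : ℂ} (hz : z ∈ unitDisk) : 1 - z ∈ Complex.slitPlane := by
  left
  have h : ‖z‖ < 1 := by simpa [unitDisk] using hz
  rw [Complex.sub_re, Complex.one_re]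
  linarith [Complex.re_le_norm z]

theorem hasDerivAt_kfun (α : ℝ) {z : ℂ} (hz : z ∈ unitDisk) :
    HasDerivAt (kfun α) ((1 - z) ^ ((2 * α - 2 : ℝ) : ℂ)) z := by
  have hs := one_sub_mem_slitPlane hz
  have hd : HasDerivAt (fun w : ℂ => 1 - w) (-1) z := by
    simpa using (hasDerivAt_id z).const_sub 1
  by_cases hα : α = 1 / 2
  · have hk : kfun α = fun w => -Complex.log (1 - w) := by
      funext w
      simp [kfun, hα]
    rw [hk]
    refine (hd.clog hs).neg.congr_deriv ?_
    have he : ((2 * α - 2 : ℝ) : ℂ) = -1 := by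
      rw [hα]
      norm_num
    rw [he, Complex.cpow_neg_one, neg_div, neg_neg, one_div]
  · have hk : kfun α = fun w =>
        ((1 - w) ^ ((2 * α - 1 : ℝ) : ℂ) - 1) / ((1 - 2 * α : ℝ) : ℂ) := by
      funext w
      simp only [kfun, if_neg hα]
    rw [hk]
    refine (((hd.cpow_const (c := ((2 * α - 1 : ℝ) : ℂ)) hs).sub_const 1).div_const
      ((1 - 2 * α : ℝ) : ℂ)).congr_deriv ?_
    have hne : ((1 - 2 * α : ℝ) : ℂ) ≠ 0 := by
      rw [Complex.ofReal_ne_zero]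
      intro h
      exact hα (by linarith)
    have he : ((2 * α - 1 : ℝ) : ℂ) - 1 = ((2 * α - 2 : ℝ) : ℂ) := by
      push_cast
      ring
    rw [he, div_eq_iff hne]
    push_cast
    ring

theorem neg_half_lt_re_div_one_sub {z : ℂ} (hz : z ∈ unitDisk) :
    -(1 / 2) < (z / (1 - z)).re := by
  have h : ‖z‖ < 1 := by simpa [unitDisk] using hz
  have hN : 0 < Complex.normSq (1 - z) :=
    Complex.normSq_pos.2 (Complex.slitPlane_ne_zero (one_sub_mem_slitPlane hz))
  have hsq : z.re * z.re + z.im * z.im < 1 := by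
    rw [← Complex.normSq_apply, Complex.normSq_eq_norm_sq]
    nlinarith [norm_nonneg z]
  rw [Complex.div_re, ← add_div, lt_div_iff₀ hN]
  simp only [Complex.normSq_apply, Complex.sub_re, Complex.sub_im, Complex.one_re, Complex.one_im]
  nlinarith

theorem isConvexOfOrder_kfun {α : ℝ} (hα : α < 1) : IsConvexOfOrder α (kfun α) := by
  have h0 : (0 : ℂ) ∈ unitDisk := by simp [unitDisk]
  refine ⟨fun z hz => (hasDerivAt_kfun α hz).differentiableAt.differentiableWithinAt, ?_, ?_, ?_⟩
  · simp [kfun]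
  · simp [(hasDerivAt_kfun α h0).deriv]
  · intro z hz
    have hs := one_sub_mem_slitPlane hz
    have hne := Complex.slitPlane_ne_zero hs
    have hd : HasDerivAt (fun w : ℂ => 1 - w) (-1) z := by
      simpa using (hasDerivAt_id z).const_sub 1
    have hev : deriv (kfun α) =ᶠ[nhds z] fun w => (1 - w) ^ ((2 * α - 2 : ℝ) : ℂ) := by
      filter_upwards [Metric.isOpen_ball.mem_nhds hz] with w hw
      exact (hasDerivAt_kfun α hw).deriv
    have hpow : (1 - z) ^ ((2 * α - 2 : ℝ) : ℂ) ≠ 0 := by simp [Complex.cpow_eq_zero_iff, hne]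
    rw [hev.deriv_eq, hev.eq_of_nhds,
      (hd.cpow_const (c := ((2 * α - 2 : ℝ) : ℂ)) hs).deriv]
    refine ⟨hpow, ?_⟩
    have he : 1 + z * (((2 * α - 2 : ℝ) : ℂ) * (1 - z) ^ (((2 * α - 2 : ℝ) : ℂ) - 1) * -1) /
        (1 - z) ^ ((2 * α - 2 : ℝ) : ℂ) = 1 + ((2 - 2 * α : ℝ) : ℂ) * (z / (1 - z)) := by
      rw [Complex.cpow_sub _ _ hne, Complex.cpow_one]
      generalize (1 - z) ^ ((2 * α - 2 : ℝ) : ℂ) = p at hpow ⊢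
      field_simp
      push_cast
      ring
    rw [he, Complex.add_re, Complex.re_ofReal_mul, Complex.one_re]
    nlinarith [neg_half_lt_re_div_one_sub hz]

/-- If `g` grows like `A • c` along points tending to `1`, where `e^{it} c` points into the
left half-plane, then `Re (e^{it} g(z)/z)` is unbounded below. -/
theorem not_bddBelow_re_of_tendsto_div {g : ℂ → ℂ} {t : ℝ} {ι : Type*} {l : Filter ι} [l.NeBot]
    {z : ι → ℂ} {A : ι → ℝ} {c : ℂ} (hz : Filter.Tendsto z l (nhds 1))
    (hmem : ∀ᶠ r in l, z r ∈ unitDisk) (hA : Filter.Tendsto A l Filter.atTop)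
    (hg : Filter.Tendsto (fun r => g (z r) / (A r : ℂ)) l (nhds c))
    (hc : (Complex.exp ((t : ℂ) * Complex.I) * c).re < 0) :
    ¬ BddBelow {x : ℝ | ∃ z ∈ unitDisk, z ≠ 0 ∧
          x = (Complex.exp ((t : ℂ) * Complex.I) * (g z / z)).re} := by
  rintro ⟨b, hb⟩
  have h1 : Filter.Tendsto
      (fun r => (Complex.exp ((t : ℂ) * Complex.I) * (g (z r) / (A r : ℂ) / z r)).re) l
      (nhds (Complex.exp ((t : ℂ) * Complex.I) * (c / 1)).re) :=
    (Complex.continuous_re.tendsto _).comp ((hg.div hz one_ne_zero).const_mul _)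
  rw [div_one] at h1
  have h2 := hA.atTop_mul_neg hc h1
  obtain ⟨r, hr, hrm, hr0, hrA⟩ := ((h2.eventually_lt_atBot b).and (hmem.and
    ((hz.eventually_ne one_ne_zero).and (hA.eventually_gt_atTop 0)))).exists
  have hle := hb ⟨z r, hrm, hr0, rfl⟩
  rw [← Complex.re_ofReal_mul] at hr
  have hA0 : (A r : ℂ) ≠ 0 := Complex.ofReal_ne_zero.2 hrA.ne'
  have he : (A r : ℂ) * (Complex.exp ((t : ℂ) * Complex.I) * (g (z r) / (A r : ℂ) / z r)) =
      Complex.exp ((t : ℂ) * Complex.I) * (g (z r) / z r) := by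
    field_simp
  rw [he] at hr
  exact absurd hr (not_lt.2 hle)

/-- Points approaching `1` inside the disk along a ray at angle `θ` to the radius. -/
theorem eventually_one_sub_mul_exp_mem_unitDisk {θ : ℝ} (hθ : 0 < Real.cos θ) :
    ∀ᶠ r : ℝ in nhdsWithin 0 (Set.Ioi 0),
      1 - (r : ℂ) * Complex.exp (((-θ : ℝ) : ℂ) * Complex.I) ∈ unitDisk := by
  filter_upwards [Ioo_mem_nhdsGT (show (0 : ℝ) < 2 * Real.cos θ by linarith)] with r hr
  have h : ‖1 - (r : ℂ) * Complex.exp (((-θ : ℝ) : ℂ) * Complex.I)‖ ^ 2 < 1 := by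
    rw [← Complex.normSq_eq_norm_sq, Complex.normSq_apply]
    simp only [Complex.sub_re, Complex.sub_im, Complex.re_ofReal_mul, Complex.im_ofReal_mul,
      Complex.exp_ofReal_mul_I_re, Complex.exp_ofReal_mul_I_im, Complex.one_re, Complex.one_im,
      Real.cos_neg, Real.sin_neg]
    have he : (1 - r * Real.cos θ) * (1 - r * Real.cos θ) +
        (0 - r * -Real.sin θ) * (0 - r * -Real.sin θ) = 1 - r * (2 * Real.cos θ - r) := by
      linear_combination r ^ 2 * Real.sin_sq_add_cos_sq θ
    rw [he]
    linarith [mul_pos hr.1 (sub_pos.2 hr.2)]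
  simpa [unitDisk, abs_lt] using (sq_lt_one_iff_abs_lt_one _).1 h

theorem tendsto_one_sub_mul_exp (θ : ℝ) :
    Filter.Tendsto (fun r : ℝ => 1 - (r : ℂ) * Complex.exp (((-θ : ℝ) : ℂ) * Complex.I))
      (nhdsWithin 0 (Set.Ioi 0)) (nhds 1) := by
  have h : Continuous fun r : ℝ => 1 - (r : ℂ) * Complex.exp (((-θ : ℝ) : ℂ) * Complex.I) := by
    fun_prop
  simpa using (h.tendsto 0).mono_left nhdsWithin_le_nhds

theorem not_bddBelow_re_kfun_half {t : ℝ} (ht0 : Real.pi / 2 < t) (ht1 : t ≤ Real.pi) :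
    ¬ BddBelow {x : ℝ | ∃ z ∈ unitDisk, z ≠ 0 ∧
          x = (Complex.exp ((t : ℂ) * Complex.I) * (kfun (1 / 2) z / z)).re} := by
  have hA : Filter.Tendsto (fun r : ℝ => -Real.log r) (nhdsWithin 0 (Set.Ioi 0)) Filter.atTop :=
    Filter.tendsto_neg_atBot_atTop.comp Real.tendsto_log_nhdsGT_zero
  refine not_bddBelow_re_of_tendsto_div (c := 1) (tendsto_one_sub_mul_exp 0)
    (eventually_one_sub_mul_exp_mem_unitDisk (by simp)) hA ?_ ?_
  · refine tendsto_const_nhds.congr' ?_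
    filter_upwards [hA.eventually_gt_atTop 0, self_mem_nhdsWithin] with r hr hr0
    have hne : ((-Real.log r : ℝ) : ℂ) ≠ 0 := Complex.ofReal_ne_zero.2 hr.ne'
    rw [eq_comm, div_eq_one_iff_eq hne]
    simp [kfun, Complex.ofReal_log (le_of_lt hr0)]
  · rw [mul_one, Complex.exp_ofReal_mul_I_re]
    exact Real.cos_neg_of_pi_div_two_lt_of_lt ht0 (by linarith [Real.pi_pos])

theorem not_bddBelow_re_kfun_of_lt_half {α t : ℝ} (hα0 : 0 < α) (hα1 : α < 1 / 2)
    (ht0 : α * Real.pi < t) (ht1 : t ≤ Real.pi) :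
    ¬ BddBelow {x : ℝ | ∃ z ∈ unitDisk, z ≠ 0 ∧
          x = (Complex.exp ((t : ℂ) * Complex.I) * (kfun α z / z)).re} := by
  have hβ : 0 < 1 - 2 * α := by linarith
  have hπ := Real.pi_pos
  obtain ⟨θ, hθ1, hθ2⟩ := exists_between
    (show max 0 ((Real.pi / 2 - t) / (1 - 2 * α)) < Real.pi / 2 by
      refine max_lt (by linarith) ?_
      rw [div_lt_iff₀ hβ]
      nlinarith)
  obtain ⟨hθ0, hθt⟩ := max_lt_iff.1 hθ1
  rw [div_lt_iff₀ hβ] at hθt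
  have hcos : Real.cos (t + (1 - 2 * α) * θ) < 0 :=
    Real.cos_neg_of_pi_div_two_lt_of_lt (by linarith) (by nlinarith)
  have hA : Filter.Tendsto (fun r : ℝ => r ^ (2 * α - 1)) (nhdsWithin 0 (Set.Ioi 0))
      Filter.atTop := tendsto_rpow_neg_nhdsGT_zero (by linarith)
  have hAinv : Filter.Tendsto (fun r : ℝ => (((r ^ (2 * α - 1))⁻¹ : ℝ) : ℂ))
      (nhdsWithin 0 (Set.Ioi 0)) (nhds ((0 : ℝ) : ℂ)) :=
    (Complex.continuous_ofReal.tendsto 0).comp hA.inv_tendsto_atTop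
  refine not_bddBelow_re_of_tendsto_div
    (c := Complex.exp ((((1 - 2 * α) * θ : ℝ) : ℂ) * Complex.I) / ((1 - 2 * α : ℝ) : ℂ))
    (tendsto_one_sub_mul_exp θ)
    (eventually_one_sub_mul_exp_mem_unitDisk
      (Real.cos_pos_of_mem_Ioo ⟨by linarith, hθ2⟩)) hA ?_ ?_
  · have hlim := (hAinv.const_sub
      (Complex.exp ((((1 - 2 * α) * θ : ℝ) : ℂ) * Complex.I))).div_const ((1 - 2 * α : ℝ) : ℂ)
    rw [Complex.ofReal_zero, sub_zero] at hlim
    refine hlim.congr' ?_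
    filter_upwards [self_mem_nhdsWithin] with r (hr : 0 < r)
    have hpow : ((r : ℂ) * Complex.exp (((-θ : ℝ) : ℂ) * Complex.I)) ^ ((2 * α - 1 : ℝ) : ℂ) =
        ((r ^ (2 * α - 1) : ℝ) : ℂ) *
          Complex.exp ((((1 - 2 * α) * θ : ℝ) : ℂ) * Complex.I) := by
      have hne : (r : ℂ) * Complex.exp (((-θ : ℝ) : ℂ) * Complex.I) ≠ 0 :=
        mul_ne_zero (Complex.ofReal_ne_zero.2 hr.ne') (Complex.exp_ne_zero _)
      have hlog : Complex.log ((r : ℂ) * Complex.exp (((-θ : ℝ) : ℂ) * Complex.I)) =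
          (Real.log r : ℂ) + ((-θ : ℝ) : ℂ) * Complex.I := by
        rw [Complex.log_ofReal_mul hr (Complex.exp_ne_zero _), Complex.log_exp]
        · simp only [Complex.im_ofReal_mul, Complex.I_im]
          linarith
        · simp only [Complex.im_ofReal_mul, Complex.I_im]
          linarith
      rw [Complex.cpow_def_of_ne_zero hne, hlog, Real.rpow_def_of_pos hr, Complex.ofReal_exp,
        ← Complex.exp_add]
      congr 1
      push_cast
      ring
    have hne : ((r ^ (2 * α - 1) : ℝ) : ℂ) ≠ 0 :=
      Complex.ofReal_ne_zero.2 (Real.rpow_pos_of_pos hr _).ne'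
    simp only [kfun, if_neg hα1.ne, sub_sub_cancel]
    rw [hpow, Complex.ofReal_inv, div_right_comm]
    congr 1
    field_simp
  · rw [← mul_div_assoc, ← Complex.exp_add, ← add_mul, ← Complex.ofReal_add,
      Complex.div_ofReal_re, Complex.exp_ofReal_mul_I_re]
    exact div_neg_of_neg_of_pos hcos hβ

/-- for `0 < α ≤ 1/2` and `απ < t ≤ π`, the set of values `Re(e^{it} f(z)/z)`
over `f ∈ K(α)` is not bounded below (`Q_α(t) = -∞`); indeed already the values
`Re(e^{it} k_α(z)/z)` are not bounded below. -/
theorem Q_eq_neg_infty (α : ℝ) (hα0 : 0 < α) (hα1 : α ≤ 1 / 2)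
    (t : ℝ) (ht0 : α * Real.pi < t) (ht1 : t ≤ Real.pi) :
    ¬ BddBelow {x : ℝ | ∃ f : ℂ → ℂ, IsConvexOfOrder α f ∧
        ∃ z ∈ unitDisk, z ≠ 0 ∧
          x = (Complex.exp ((t : ℂ) * Complex.I) * (f z / z)).re} ∧
    ¬ BddBelow {x : ℝ | ∃ z ∈ unitDisk, z ≠ 0 ∧
          x = (Complex.exp ((t : ℂ) * Complex.I) * (kfun α z / z)).re} := by
  have hk : ¬ BddBelow {x : ℝ | ∃ z ∈ unitDisk, z ≠ 0 ∧
      x = (Complex.exp ((t : ℂ) * Complex.I) * (kfun α z / z)).re} := by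
    rcases hα1.eq_or_lt with rfl | hα1
    · exact not_bddBelow_re_kfun_half (by linarith) ht1
    · exact not_bddBelow_re_kfun_of_lt_half hα0 hα1 ht0 ht1
  refine ⟨fun h => hk (h.mono ?_), hk⟩
  rintro x ⟨z, hz, hz0, rfl⟩
  exact ⟨kfun α, isConvexOfOrder_kfun (by linarith), z, hz, hz0, rfl⟩
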